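/- Let X_1,...,X_n be bounded real random variables with H(X_i) > −∞ for all i. Then I_sym(X_1,...,X_n) = Ī_sym(X_1,...,X_n) = S(μ_{(X_1,...,X_n)}, μ_{X_1}⊗⋯⊗μ_{X_n}), the relative entropy of the joint distribution with respect to the product of marginals. In particular, I_sym(X_1,...,X_n) = 0 if and only if X_1,...,X_n are independent. -/

import Mathlib

open MeasureTheory Filter
open scoped Classical ENNReal

/-- Normalized coordinate sum `κ_N(x) = N⁻¹ ∑_j x_j`. -/
noncomputable def kappa {N : ℕ} (x : Fin N → ℝ) : ℝ := (∑ j, x j) / N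

/-- The micro-state set `Δ_R(X₁,…,Xₙ;N,m,δ)`: `n`-tuples of vectors in
`[-R,R]^N` whose normalized mixed moments up to order `m` approximate the
joint moments of `(X₁,…,Xₙ)` within `δ`. -/
noncomputable def DeltaR {Ω : Type*} [MeasurableSpace Ω] (μ : Measure Ω)
    {n : ℕ} (X : Fin n → Ω → ℝ) (R : ℝ) (N m : ℕ) (δ : ℝ) :
    Set (Fin n → Fin N → ℝ) :=
  {x | (∀ i j, |x i j| ≤ R) ∧
    ∀ k : ℕ, 1 ≤ k → k ≤ m → ∀ idx : Fin k → Fin n,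
      |kappa (fun j => ∏ l, x (idx l) j) - ∫ ω, ∏ l, X (idx l) ω ∂μ| < δ}

/-- The permutation micro-state set `Δ_{sym,R}(X₁,…,Xₙ;N,m,δ) ⊆ S_N^n`:
tuples `(σ₁,…,σₙ)` such that `(σ₁(x₁),…,σₙ(xₙ)) ∈ Δ_R` for some nondecreasing
`x₁,…,xₙ ∈ ℝ^N_≤`. -/
noncomputable def DeltaSymR {Ω : Type*} [MeasurableSpace Ω] (μ : Measure Ω)
    {n : ℕ} (X : Fin n → Ω → ℝ) (R : ℝ) (N m : ℕ) (δ : ℝ) :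
    Set (Fin n → Equiv.Perm (Fin N)) :=
  {σ | ∃ x : Fin n → Fin N → ℝ, (∀ i, Monotone (x i)) ∧
    (fun i j => x i ((σ i)⁻¹ j)) ∈ DeltaR μ X R N m δ}

/-- `(1/N) log γ_{S_N}^{⊗n}(Δ_{sym,R}(X₁,…,Xₙ;N,m,δ))`, the normalized log of
the uniform probability of the permutation micro-states. -/
noncomputable def symQ {Ω : Type*} [MeasurableSpace Ω] (μ : Measure Ω)
    {n : ℕ} (X : Fin n → Ω → ℝ) (R : ℝ) (N m : ℕ) (δ : ℝ) : ℝ :=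
  Real.log ((Nat.card (DeltaSymR μ X R N m δ) : ℝ) / (N.factorial : ℝ) ^ n) / N

/-- `(1/N) log λ_N^{⊗n}(Δ_R(X₁,…,Xₙ;N,m,δ))`, the normalized log-volume of the
micro-states. -/
noncomputable def volQ {Ω : Type*} [MeasurableSpace Ω] (μ : Measure Ω)
    {n : ℕ} (X : Fin n → Ω → ℝ) (R : ℝ) (N m : ℕ) (δ : ℝ) : ℝ :=
  Real.log (volume (DeltaR μ X R N m δ)).toReal / N

/-- The mutual information `I_sym`, via `limsup` in `N` and the limit
(= infimum, by monotonicity) over `m → ∞`, `δ → 0+`. -/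
noncomputable def Isym {Ω : Type*} [MeasurableSpace Ω] (μ : Measure Ω)
    {n : ℕ} (X : Fin n → Ω → ℝ) (R : ℝ) : EReal :=
  -(⨅ (m : ℕ) (δ : ℝ) (_ : 0 < δ),
      Filter.limsup (fun N : ℕ => ((symQ μ X R N m δ : ℝ) : EReal)) atTop)

/-- The upper mutual information `Ī_sym`, via `liminf` in `N`. -/
noncomputable def IsymUpper {Ω : Type*} [MeasurableSpace Ω] (μ : Measure Ω)
    {n : ℕ} (X : Fin n → Ω → ℝ) (R : ℝ) : EReal :=
  -(⨅ (m : ℕ) (δ : ℝ) (_ : 0 < δ),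
      Filter.liminf (fun N : ℕ => ((symQ μ X R N m δ : ℝ) : EReal)) atTop)

/-- Boltzmann–Gibbs (differential) entropy of `μ` with respect to a reference
measure `vol`, with value `⊥` (i.e. `-∞`) when `μ` has no density. -/
noncomputable def diffEntropy {E : Type*} [MeasurableSpace E] (vol μ : Measure E) : EReal :=
  if μ ≪ vol then
    ((∫⁻ x, ENNReal.ofReal (Real.negMulLog (μ.rnDeriv vol x).toReal) ∂vol : ℝ≥0∞) : EReal)
      - ((∫⁻ x, ENNReal.ofReal (-(Real.negMulLog (μ.rnDeriv vol x).toReal)) ∂vol : ℝ≥0∞) : EReal)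
  else ⊥

/-- Lemma 1.2 of the paper (assumed): the Boltzmann–Gibbs entropy is the
asymptotic normalized log-volume of the micro-state sets `Δ_R`, the limit in
`N` existing. -/
def MicrostateVolumeFormula {Ω : Type*} [MeasurableSpace Ω] (μ : Measure Ω)
    {n : ℕ} (X : Fin n → Ω → ℝ) (R : ℝ) : Prop :=
  diffEntropy volume (Measure.map (fun ω (i : Fin n) => X i ω) μ)
      = ⨅ (m : ℕ) (δ : ℝ) (_ : 0 < δ),
          Filter.limsup (fun N : ℕ => ((volQ μ X R N m δ : ℝ) : EReal)) atTop ∧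
  diffEntropy volume (Measure.map (fun ω (i : Fin n) => X i ω) μ)
      = ⨅ (m : ℕ) (δ : ℝ) (_ : 0 < δ),
          Filter.liminf (fun N : ℕ => ((volQ μ X R N m δ : ℝ) : EReal)) atTop

/-- Relative entropy (Kullback–Leibler divergence) `S(μ,ν)`, with value `⊤`
(i.e. `+∞`) when `μ` is not absolutely continuous with respect to `ν`. -/
noncomputable def relEntropy {E : Type*} [MeasurableSpace E] (μ ν : Measure E) : EReal :=
  if μ ≪ ν then
    ((∫⁻ x, ENNReal.ofReal (Real.log (μ.rnDeriv ν x).toReal) ∂μ : ℝ≥0∞) : EReal)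
      - ((∫⁻ x, ENNReal.ofReal (-(Real.log (μ.rnDeriv ν x).toReal)) ∂μ : ℝ≥0∞) : EReal)
  else ⊤

/-!
A vector with nondecreasing coordinates in `[-R, R]` is determined, up to a small normalized `ℓ¹`
error, by finitely many of its moments. Hence `Δ_R(X₁, …, Xₙ)` is squeezed between two sets of the
form `⋃_σ σ(Δ_R(X₁) × ⋯ × Δ_R(Xₙ) ∩ (ℝ^N_≤)ⁿ)`, with `σ` running over `Δ_sym` for slightly different
parameters `m`, `δ`. The chambers `σ((ℝ^N_≤)ⁿ)` tile `(ℝ^N)ⁿ`, so the volume of such a set is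
`γ(Δ_sym) ∏ᵢ vol Δ_R(Xᵢ)`. Taking logarithms and limits,
`H(X₁, …, Xₙ) = -I_sym + ∑ᵢ H(Xᵢ)`, and the chain rule for densities identifies
`-H(X₁, …, Xₙ) + ∑ᵢ H(Xᵢ)` with the relative entropy.
-/

section ExtendedIntegral

variable {E : Type*} [MeasurableSpace E] {P : Measure E} {f g : E → ℝ}

/-- The integral of a real function with values in `[-∞, ∞]`, as the integral of its positive part
minus the integral of its negative part. When both are infinite it is `⊤ - ⊤ = ⊥`, so the notion
is meaningful only when one of the two is finite. -/
noncomputable def extIntegral (P : Measure E) (f : E → ℝ) : EReal :=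
  ((∫⁻ x, ENNReal.ofReal (f x) ∂P : ℝ≥0∞) : EReal)
    - ((∫⁻ x, ENNReal.ofReal (-f x) ∂P : ℝ≥0∞) : EReal)

lemma extIntegral_congr_ae (h : f =ᵐ[P] g) : extIntegral P f = extIntegral P g := by
  have hpos : (fun x => ENNReal.ofReal (f x)) =ᵐ[P] fun x => ENNReal.ofReal (g x) := by
    filter_upwards [h] with x hx using by rw [hx]
  have hneg : (fun x => ENNReal.ofReal (-f x)) =ᵐ[P] fun x => ENNReal.ofReal (-g x) := by
    filter_upwards [h] with x hx using by rw [hx]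
  rw [extIntegral, extIntegral, lintegral_congr_ae hpos, lintegral_congr_ae hneg]

lemma extIntegral_of_integrable (hf : Integrable f P) :
    extIntegral P f = ((∫ x, f x ∂P : ℝ) : EReal) := by
  have hneg : ∫⁻ x, ENNReal.ofReal (-f x) ∂P ≠ ⊤ := hf.neg.lintegral_lt_top.ne
  rw [extIntegral, integral_eq_lintegral_pos_part_sub_lintegral_neg_part hf, EReal.coe_sub,
    EReal.coe_ennreal_toReal hf.lintegral_lt_top.ne, EReal.coe_ennreal_toReal hneg]

lemma integrable_of_lintegral_ofReal_ne_top (hf : AEStronglyMeasurable f P)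
    (hpos : ∫⁻ x, ENNReal.ofReal (f x) ∂P ≠ ⊤) (hneg : ∫⁻ x, ENNReal.ofReal (-f x) ∂P ≠ ⊤) :
    Integrable f P := by
  have integrable_max_zero : ∀ h : E → ℝ, AEStronglyMeasurable h P →
      ∫⁻ x, ENNReal.ofReal (h x) ∂P ≠ ⊤ → Integrable (fun x => max (h x) 0) P := by
    intro h hm hfin
    have hmax : AEStronglyMeasurable (fun x => max (h x) 0) P := hm.sup aestronglyMeasurable_const
    refine (lintegral_ofReal_ne_top_iff_integrable hmax
      (ae_of_all _ fun x => le_max_right _ _)).1 ?_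
    simpa only [ENNReal.ofReal_max, ENNReal.ofReal_zero, zero_le, sup_of_le_left] using hfin
  exact ((integrable_max_zero f hf hpos).sub (integrable_max_zero (-f) hf.neg hneg)).congr
    (ae_of_all _ fun x => max_zero_sub_max_neg_zero_eq_self (f x))

lemma extIntegral_of_not_integrable (hf : AEStronglyMeasurable f P)
    (hneg : ∫⁻ x, ENNReal.ofReal (-f x) ∂P ≠ ⊤) (hfP : ¬ Integrable f P) :
    extIntegral P f = ⊤ := by
  have hpos : ∫⁻ x, ENNReal.ofReal (f x) ∂P = ⊤ := by
    by_contra hpos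
    exact hfP (integrable_of_lintegral_ofReal_ne_top hf hpos hneg)
  rw [extIntegral, hpos, ← EReal.coe_ennreal_toReal hneg, EReal.coe_ennreal_top, EReal.top_sub_coe]

lemma extIntegral_neg (hneg : ∫⁻ x, ENNReal.ofReal (-f x) ∂P ≠ ⊤) :
    extIntegral P (fun x => -f x) = -extIntegral P f := by
  rw [extIntegral, extIntegral, EReal.neg_sub (.inl (EReal.coe_ennreal_ne_bot _))
    (.inr (by simpa using hneg)), sub_eq_add_neg, add_comm]
  simp only [neg_neg]

lemma extIntegral_sub (hf : AEStronglyMeasurable f P)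
    (hneg : ∫⁻ x, ENNReal.ofReal (-f x) ∂P ≠ ⊤) (hg : Integrable g P) :
    extIntegral P (f - g) = extIntegral P f - ((∫ x, g x ∂P : ℝ) : EReal) := by
  by_cases hfP : Integrable f P
  · rw [extIntegral_of_integrable (hfP.sub hg), extIntegral_of_integrable hfP, integral_sub' hfP hg,
      EReal.coe_sub]
  · have hneg' : ∫⁻ x, ENNReal.ofReal (-(f x - g x)) ∂P ≠ ⊤ := by
      refine ne_top_of_le_ne_top (ENNReal.add_ne_top.2 ⟨hneg, hg.lintegral_lt_top.ne⟩) ?_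
      rw [← lintegral_add_left' (by fun_prop)]
      refine lintegral_mono fun x => ?_
      rw [show -(f x - g x) = -f x + g x by ring]
      exact ENNReal.ofReal_add_le
    have hfg : ¬ Integrable (f - g) P := fun h => hfP (sub_add_cancel f g ▸ h.add hg)
    rw [extIntegral_of_not_integrable (hf.sub hg.1) hneg' hfg,
      extIntegral_of_not_integrable hf hneg hfP, EReal.top_sub_coe]

end ExtendedIntegral

section RelativeEntropy

variable {E : Type*} [MeasurableSpace E] {P ν vol : Measure E}

lemma relEntropy_of_ac (h : P ≪ ν) : relEntropy P ν = extIntegral P (llr P ν) :=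
  if_pos h

lemma relEntropy_of_not_ac (h : ¬ P ≪ ν) : relEntropy P ν = ⊤ :=
  if_neg h

lemma diffEntropy_of_not_ac (h : ¬ P ≪ vol) : diffEntropy vol P = ⊥ :=
  if_neg h

lemma lintegral_ofReal_negMulLog_rnDeriv [SigmaFinite P] [SigmaFinite vol] (h : P ≪ vol) :
    ∫⁻ x, ENNReal.ofReal (Real.negMulLog (P.rnDeriv vol x).toReal) ∂vol
      = ∫⁻ x, ENNReal.ofReal (-llr P vol x) ∂P := by
  rw [← lintegral_rnDeriv_mul h (by fun_prop)]
  refine lintegral_congr_ae ?_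
  filter_upwards [P.rnDeriv_ne_top vol] with x hx
  rw [llr, Real.negMulLog, neg_mul_comm, ENNReal.ofReal_mul ENNReal.toReal_nonneg,
    ENNReal.ofReal_toReal hx]

lemma lintegral_ofReal_neg_negMulLog_rnDeriv [SigmaFinite P] [SigmaFinite vol] (h : P ≪ vol) :
    ∫⁻ x, ENNReal.ofReal (-Real.negMulLog (P.rnDeriv vol x).toReal) ∂vol
      = ∫⁻ x, ENNReal.ofReal (llr P vol x) ∂P := by
  rw [← lintegral_rnDeriv_mul h (by fun_prop)]
  refine lintegral_congr_ae ?_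
  filter_upwards [P.rnDeriv_ne_top vol] with x hx
  rw [llr, Real.negMulLog, neg_mul, neg_neg, ENNReal.ofReal_mul ENNReal.toReal_nonneg,
    ENNReal.ofReal_toReal hx]

lemma diffEntropy_of_ac [SigmaFinite P] [SigmaFinite vol] (h : P ≪ vol) :
    diffEntropy vol P = extIntegral P (fun x => -llr P vol x) := by
  simp only [extIntegral, neg_neg, diffEntropy, if_pos h, lintegral_ofReal_negMulLog_rnDeriv h,
    lintegral_ofReal_neg_negMulLog_rnDeriv h]

lemma lintegral_ofReal_neg_llr_ne_top [SigmaFinite P] [SigmaFinite vol] {S : Set E}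
    (h : P ≪ vol) (hS : MeasurableSet S) (hvolS : vol S ≠ ⊤) (hPS : P Sᶜ = 0) :
    ∫⁻ x, ENNReal.ofReal (-llr P vol x) ∂P ≠ ⊤ := by
  have hzero : ∀ᵐ x ∂vol, x ∈ Sᶜ → P.rnDeriv vol x = 0 := by
    rwa [← Measure.setLIntegral_rnDeriv h,
      setLIntegral_eq_zero_iff hS.compl (P.measurable_rnDeriv vol)] at hPS
  rw [← lintegral_ofReal_negMulLog_rnDeriv h]
  refine ne_top_of_le_ne_top hvolS ?_
  rw [← lintegral_indicator_one hS]
  refine lintegral_mono_ae ?_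
  filter_upwards [hzero] with x hx
  by_cases hxS : x ∈ S
  · rw [Set.indicator_of_mem hxS, Pi.one_apply, ENNReal.ofReal_le_one]
    exact (Real.negMulLog_le_one_sub_self ENNReal.toReal_nonneg).trans
      (sub_le_self 1 ENNReal.toReal_nonneg)
  · simp [hx hxS]

lemma diffEntropy_eq_neg_relEntropy [SigmaFinite P] [SigmaFinite vol] {S : Set E}
    (hS : MeasurableSet S) (hvolS : vol S ≠ ⊤) (hPS : P Sᶜ = 0) :
    diffEntropy vol P = -relEntropy P vol := by
  by_cases h : P ≪ vol
  · rw [diffEntropy_of_ac h, relEntropy_of_ac h,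
      extIntegral_neg (lintegral_ofReal_neg_llr_ne_top h hS hvolS hPS)]
  · rw [diffEntropy_of_not_ac h, relEntropy_of_not_ac h, EReal.neg_top]

lemma diffEntropy_ne_top [SigmaFinite P] [SigmaFinite vol] {S : Set E}
    (hS : MeasurableSet S) (hvolS : vol S ≠ ⊤) (hPS : P Sᶜ = 0) : diffEntropy vol P ≠ ⊤ := by
  by_cases h : P ≪ vol
  · rw [diffEntropy_of_ac h, extIntegral, sub_eq_add_neg]
    refine EReal.add_ne_top ?_ ?_
    · simpa using lintegral_ofReal_neg_llr_ne_top h hS hvolS hPS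
    · simp
  · rw [diffEntropy_of_not_ac h]
    exact bot_ne_top

lemma diffEntropy_of_integrable_llr [SigmaFinite P] [SigmaFinite vol] {S : Set E}
    (hS : MeasurableSet S) (hvolS : vol S ≠ ⊤) (hPS : P Sᶜ = 0) (h : P ≪ vol)
    (hint : Integrable (llr P vol) P) :
    diffEntropy vol P = ((-∫ x, llr P vol x ∂P : ℝ) : EReal) := by
  rw [diffEntropy_eq_neg_relEntropy hS hvolS hPS, relEntropy_of_ac h,
    extIntegral_of_integrable hint, EReal.coe_neg]

lemma integrable_llr_of_diffEntropy_ne_bot [SigmaFinite P] [SigmaFinite vol] {S : Set E}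
    (hS : MeasurableSet S) (hvolS : vol S ≠ ⊤) (hPS : P Sᶜ = 0) (hfin : diffEntropy vol P ≠ ⊥) :
    P ≪ vol ∧ Integrable (llr P vol) P := by
  rw [diffEntropy_eq_neg_relEntropy hS hvolS hPS, ne_eq, EReal.neg_eq_bot_iff] at hfin
  have h : P ≪ vol := not_not.1 fun h => hfin (relEntropy_of_not_ac h)
  refine ⟨h, not_not.1 fun hint => hfin ?_⟩
  rw [relEntropy_of_ac h]
  exact extIntegral_of_not_integrable (measurable_llr P vol).aestronglyMeasurable
    (lintegral_ofReal_neg_llr_ne_top h hS hvolS hPS) hint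

lemma relEntropy_eq_coe_klDiv [IsProbabilityMeasure P] [IsProbabilityMeasure ν] :
    relEntropy P ν = (InformationTheory.klDiv P ν : EReal) := by
  by_cases h : P ≪ ν
  swap
  · rw [relEntropy_of_not_ac h, InformationTheory.klDiv_of_not_ac h, EReal.coe_ennreal_top]
  rw [relEntropy_of_ac h]
  by_cases hint : Integrable (llr P ν) P
  · rw [extIntegral_of_integrable hint,
      ← InformationTheory.toReal_klDiv_of_measure_eq h (by simp only [measure_univ]),
      EReal.coe_ennreal_toReal (InformationTheory.klDiv_ne_top h hint)]
  · rw [InformationTheory.klDiv_of_not_integrable hint, EReal.coe_ennreal_top]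
    exact extIntegral_of_not_integrable (measurable_llr P ν).aestronglyMeasurable
      (lintegral_ofReal_neg_llr_ne_top h .univ (measure_ne_top ν _) (by simp)) hint

lemma relEntropy_eq_zero_iff [IsProbabilityMeasure P] [IsProbabilityMeasure ν] :
    relEntropy P ν = 0 ↔ P = ν := by
  rw [relEntropy_eq_coe_klDiv, EReal.coe_ennreal_eq_zero, InformationTheory.klDiv_eq_zero_iff]

lemma llr_ae_eq_sub [SigmaFinite P] [SigmaFinite ν] [SigmaFinite vol] (hPν : P ≪ ν)
    (hν : ν ≪ vol) :
    llr P ν =ᵐ[P] llr P vol - llr ν vol := by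
  filter_upwards [(hPν.trans hν).ae_le (Measure.rnDeriv_mul_rnDeriv (κ := vol) hPν),
    Measure.rnDeriv_pos hPν, hPν.ae_le (P.rnDeriv_ne_top ν), hPν.ae_le (Measure.rnDeriv_pos hν),
    (hPν.trans hν).ae_le (ν.rnDeriv_ne_top vol)] with x hmul hP0 hPtop hν0 hνtop
  rw [Pi.sub_apply, llr, llr, llr, ← hmul, Pi.mul_apply, ENNReal.toReal_mul,
    Real.log_mul (ENNReal.toReal_ne_zero.2 ⟨hP0.ne', hPtop⟩)
      (ENNReal.toReal_ne_zero.2 ⟨hν0.ne', hνtop⟩), add_sub_cancel_right]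

lemma absolutelyContinuous_of_rnDeriv_ne_zero [SigmaFinite ν] [SigmaFinite vol] (hP : P ≪ vol)
    (hν : ν ≪ vol) (hpos : ∀ᵐ x ∂P, ν.rnDeriv vol x ≠ 0) : P ≪ ν := by
  refine .mk fun s hs hs0 => measure_eq_zero_iff_ae_notMem.2 ?_
  rw [← Measure.setLIntegral_rnDeriv hν,
    setLIntegral_eq_zero_iff hs (ν.measurable_rnDeriv vol)] at hs0
  filter_upwards [hP.ae_le hs0, hpos] with x hx hx0 hxs using hx0 (hx hxs)

lemma relEntropy_eq_sub_integral_llr [SigmaFinite P] [SigmaFinite ν] [SigmaFinite vol] {S : Set E}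
    (hS : MeasurableSet S) (hvolS : vol S ≠ ⊤) (hPS : P Sᶜ = 0) (hν : ν ≪ vol)
    (hpos : ∀ᵐ x ∂P, ν.rnDeriv vol x ≠ 0) (hint : Integrable (llr ν vol) P) :
    relEntropy P ν = relEntropy P vol - ((∫ x, llr ν vol x ∂P : ℝ) : EReal) := by
  by_cases hP : P ≪ vol
  · have hPν := absolutelyContinuous_of_rnDeriv_ne_zero hP hν hpos
    rw [relEntropy_of_ac hPν, relEntropy_of_ac hP, extIntegral_congr_ae (llr_ae_eq_sub hPν hν)]
    exact extIntegral_sub (measurable_llr P vol).aestronglyMeasurable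
      (lintegral_ofReal_neg_llr_ne_top hP hS hvolS hPS) hint
  · rw [relEntropy_of_not_ac hP, relEntropy_of_not_ac fun h => hP (h.trans hν), EReal.top_sub_coe]

end RelativeEntropy

lemma coe_ereal_finsetSum {ι : Type*} (s : Finset ι) (f : ι → ℝ) :
    ((∑ i ∈ s, f i : ℝ) : EReal) = ∑ i ∈ s, (f i : EReal) :=
  map_sum (⟨⟨Real.toEReal, EReal.coe_zero⟩, EReal.coe_add⟩ : ℝ →+ EReal) f s

lemma ereal_neg_sub_finsetSum {ι : Type*} [Fintype ι] {a : EReal} {f : ι → EReal}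
    (hbot : ∀ i, f i ≠ ⊥) (htop : ∀ i, f i ≠ ⊤) : -(a - ∑ i, f i) = -a + ∑ i, f i := by
  lift f to ι → ℝ using fun i => ⟨htop i, hbot i⟩
  rw [← coe_ereal_finsetSum]
  exact EReal.neg_sub (.inr (EReal.coe_ne_bot _)) (.inr (EReal.coe_ne_top _))

section Product

lemma lintegral_pi_fin_prod {n : ℕ} {E : Fin n → Type*} [∀ i, MeasurableSpace (E i)]
    (ν : ∀ i, Measure (E i)) [∀ i, SigmaFinite (ν i)]
    {f : ∀ i, E i → ℝ≥0∞} (hf : ∀ i, Measurable (f i)) :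
    ∫⁻ x, ∏ i, f i (x i) ∂Measure.pi ν = ∏ i, ∫⁻ x, f i x ∂ν i := by
  induction n with
  | zero => simp
  | succ n ih =>
    calc ∫⁻ x, ∏ i, f i (x i) ∂Measure.pi ν
      _ = ∫⁻ x : E 0 × ((i : Fin n) → E i.succ), f 0 x.1 * ∏ i : Fin n, f i.succ (x.2 i)
            ∂(ν 0).prod (Measure.pi fun i => ν i.succ) := by
        rw [← ((measurePreserving_piFinSuccAbove ν 0).symm).lintegral_comp_emb
          (MeasurableEquiv.measurableEmbedding _)]
        exact lintegral_congr fun x => Fin.prod_univ_succ _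
      _ = (∫⁻ x, f 0 x ∂ν 0) * ∏ i : Fin n, ∫⁻ x, f i.succ x ∂ν i.succ := by
        rw [← ih (fun i : Fin n => ν i.succ) fun i => hf i.succ]
        exact lintegral_prod_mul (hf 0).aemeasurable (Finset.measurable_fun_prod _
          fun (i : Fin n) _ => (hf i.succ).comp (measurable_pi_apply i)).aemeasurable
      _ = ∏ i, ∫⁻ x, f i x ∂ν i := by rw [Fin.prod_univ_succ]

lemma ae_rnDeriv_marginal {ι : Type*} [Countable ι] {E : ι → Type*} [∀ i, MeasurableSpace (E i)]
    {vol ν : ∀ i, Measure (E i)} [∀ i, SigmaFinite (vol i)] [∀ i, SigmaFinite (ν i)]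
    {P : Measure (∀ i, E i)}
    (hmarg : ∀ i, MeasurePreserving (fun x : ∀ i, E i => x i) P (ν i)) (h : ∀ i, ν i ≪ vol i) :
    ∀ᵐ x ∂P, ∀ i, ((ν i).rnDeriv (vol i) (x i)).toReal ≠ 0 := by
  refine ae_all_iff.2 fun i => (hmarg i).quasiMeasurePreserving.ae
    (p := fun y => ((ν i).rnDeriv (vol i) y).toReal ≠ 0) ?_
  filter_upwards [Measure.rnDeriv_pos (h i), (h i).ae_le ((ν i).rnDeriv_ne_top (vol i))]
    with y hpos htop using ENNReal.toReal_ne_zero.2 ⟨hpos.ne', htop⟩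

variable {ι : Type*} [Fintype ι] {E : ι → Type*} [∀ i, MeasurableSpace (E i)]

lemma lintegral_pi_prod (ν : ∀ i, Measure (E i)) [∀ i, SigmaFinite (ν i)]
    {f : ∀ i, E i → ℝ≥0∞} (hf : ∀ i, Measurable (f i)) :
    ∫⁻ x, ∏ i, f i (x i) ∂Measure.pi ν = ∏ i, ∫⁻ x, f i x ∂ν i := by
  let e := (Fintype.equivFin ι).symm
  rw [← (measurePreserving_piCongrLeft ν e).lintegral_comp_emb
    (MeasurableEquiv.measurableEmbedding _)]
  simp only [← e.prod_comp, MeasurableEquiv.coe_piCongrLeft, Equiv.piCongrLeft_apply_apply]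
  exact lintegral_pi_fin_prod (fun i => ν (e i)) fun i => hf (e i)

variable (vol ν : ∀ i, Measure (E i)) [∀ i, SigmaFinite (vol i)] [∀ i, SigmaFinite (ν i)]

lemma pi_eq_withDensity_rnDeriv (h : ∀ i, ν i ≪ vol i) :
    Measure.pi ν = (Measure.pi vol).withDensity fun x => ∏ i, (ν i).rnDeriv (vol i) (x i) := by
  refine Measure.pi_eq fun s hs => ?_
  have hind : (Set.univ.pi s).indicator (fun x => ∏ i, (ν i).rnDeriv (vol i) (x i))
      = fun x => ∏ i, (s i).indicator ((ν i).rnDeriv (vol i)) (x i) := by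
    ext x
    simp only [Set.indicator_apply, Set.mem_univ_pi, Finset.prod_ite_zero, Finset.mem_univ,
      true_imp_iff]
  rw [withDensity_apply _ (.univ_pi hs), ← lintegral_indicator (.univ_pi hs), hind,
    lintegral_pi_prod vol fun i => ((ν i).measurable_rnDeriv (vol i)).indicator (hs i)]
  exact Finset.prod_congr rfl fun i _ => by
    rw [lintegral_indicator (hs i), Measure.setLIntegral_rnDeriv (h i)]

lemma rnDeriv_pi (h : ∀ i, ν i ≪ vol i) :
    (Measure.pi ν).rnDeriv (Measure.pi vol)
      =ᵐ[Measure.pi vol] fun x => ∏ i, (ν i).rnDeriv (vol i) (x i) := by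
  rw [pi_eq_withDensity_rnDeriv vol ν h]
  exact Measure.rnDeriv_withDensity _ (Finset.measurable_fun_prod _
    fun i _ => ((ν i).measurable_rnDeriv (vol i)).comp (measurable_pi_apply i))

variable {vol ν}

lemma absolutelyContinuous_pi (h : ∀ i, ν i ≪ vol i) : Measure.pi ν ≪ Measure.pi vol := by
  rw [pi_eq_withDensity_rnDeriv vol ν h]
  exact withDensity_absolutelyContinuous _ _

lemma llr_pi {P : Measure (∀ i, E i)} (hP : P ≪ Measure.pi vol)
    (hmarg : ∀ i, MeasurePreserving (fun x : ∀ i, E i => x i) P (ν i)) (h : ∀ i, ν i ≪ vol i) :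
    llr (Measure.pi ν) (Measure.pi vol) =ᵐ[P] fun x => ∑ i, llr (ν i) (vol i) (x i) := by
  filter_upwards [hP.ae_le (rnDeriv_pi vol ν h), ae_rnDeriv_marginal hmarg h] with x hx hx0
  simp only [llr, hx, ENNReal.toReal_prod]
  exact Real.log_prod fun i _ => hx0 i

theorem relEntropy_pi_eq_sub_sum_integral_llr {P : Measure (∀ i, E i)} [SigmaFinite P]
    {S : Set (∀ i, E i)} (hS : MeasurableSet S) (hvolS : Measure.pi vol S ≠ ⊤) (hPS : P Sᶜ = 0)
    (hmarg : ∀ i, MeasurePreserving (fun x : ∀ i, E i => x i) P (ν i)) (h : ∀ i, ν i ≪ vol i)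
    (hint : ∀ i, Integrable (llr (ν i) (vol i)) (ν i)) :
    relEntropy P (Measure.pi ν) = relEntropy P (Measure.pi vol)
      - ((∑ i, ∫ x, llr (ν i) (vol i) x ∂ν i : ℝ) : EReal) := by
  by_cases hP : P ≪ Measure.pi vol
  swap
  · rw [relEntropy_of_not_ac hP,
      relEntropy_of_not_ac fun hPν => hP (hPν.trans (absolutelyContinuous_pi h)), EReal.top_sub_coe]
  have hpos : ∀ᵐ x ∂P, (Measure.pi ν).rnDeriv (Measure.pi vol) x ≠ 0 := by
    filter_upwards [hP.ae_le (rnDeriv_pi vol ν h), ae_rnDeriv_marginal hmarg h] with x hx hx0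
    rw [hx]
    exact Finset.prod_ne_zero_iff.2 fun i _ => (ENNReal.toReal_ne_zero.1 (hx0 i)).1
  have hint' : ∀ i, Integrable (fun x : ∀ i, E i => llr (ν i) (vol i) (x i)) P :=
    fun i => (hmarg i).integrable_comp_of_integrable (hint i)
  have hllr := llr_pi hP hmarg h
  rw [relEntropy_eq_sub_integral_llr hS hvolS hPS (absolutelyContinuous_pi h) hpos
    ((integrable_finsetSum _ fun i _ => hint' i).congr hllr.symm), integral_congr_ae hllr,
    integral_finsetSum _ fun i _ => hint' i]
  congr 3 with i
  rw [← (hmarg i).map_eq, integral_map (measurable_pi_apply i).aemeasurable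
    ((hmarg i).map_eq ▸ (hint i).1)]

theorem relEntropy_pi_eq_neg_diffEntropy_add_sum {P : Measure (∀ i, E i)} [SigmaFinite P]
    {S : ∀ i, Set (E i)} (hS : ∀ i, MeasurableSet (S i)) (hvolS : ∀ i, vol i (S i) ≠ ⊤)
    (hνS : ∀ i, ν i (S i)ᶜ = 0) (hmarg : ∀ i, MeasurePreserving (fun x : ∀ i, E i => x i) P (ν i))
    (hfin : ∀ i, diffEntropy (vol i) (ν i) ≠ ⊥) :
    relEntropy P (Measure.pi ν)
      = -diffEntropy (Measure.pi vol) P + ∑ i, diffEntropy (vol i) (ν i) := by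
  have hint := fun i => integrable_llr_of_diffEntropy_ne_bot (hS i) (hvolS i) (hνS i) (hfin i)
  have hvolpi : Measure.pi vol (Set.univ.pi S) ≠ ⊤ := by
    rw [Measure.pi_pi]
    exact ENNReal.prod_ne_top fun i _ => hvolS i
  have hPpi : P (Set.univ.pi S)ᶜ = 0 := by
    rw [Set.pi_def, Set.compl_iInter₂]
    refine (measure_biUnion_null_iff Set.countable_univ).2 fun i _ => ?_
    rw [← Set.preimage_compl, (hmarg i).measure_preimage (hS i).compl.nullMeasurableSet, hνS]
  have hSpi := MeasurableSet.univ_pi hS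
  have hsum : ∑ i, diffEntropy (vol i) (ν i)
      = ((-∑ i, ∫ x, llr (ν i) (vol i) x ∂ν i : ℝ) : EReal) := by
    rw [← Finset.sum_neg_distrib, coe_ereal_finsetSum]
    exact Finset.sum_congr rfl fun i _ => diffEntropy_of_integrable_llr (hS i) (hvolS i) (hνS i)
      (hint i).1 (hint i).2
  rw [relEntropy_pi_eq_sub_sum_integral_llr hSpi hvolpi hPpi hmarg (fun i => (hint i).1)
    fun i => (hint i).2, diffEntropy_eq_neg_relEntropy hSpi hvolpi hPpi, neg_neg, hsum,
    EReal.coe_neg, sub_eq_add_neg]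

end Product

section Map

variable {E F : Type*} [MeasurableSpace E] [MeasurableSpace F]

lemma diffEntropy_map (P vol : Measure E) [SigmaFinite P] [SigmaFinite vol] (e : E ≃ᵐ F) :
    diffEntropy (vol.map e) (P.map e) = diffEntropy vol P := by
  have hac : P.map e ≪ vol.map e ↔ P ≪ vol := by
    refine ⟨fun h => ?_, e.measurableEmbedding.absolutelyContinuous_map⟩
    simpa only [MeasurableEquiv.map_symm_map] using h.map e.symm.measurable
  have hlint : ∀ φ : ℝ → ℝ,
      ∫⁻ y, ENNReal.ofReal (φ ((P.map e).rnDeriv (vol.map e) y).toReal) ∂vol.map e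
        = ∫⁻ x, ENNReal.ofReal (φ (P.rnDeriv vol x).toReal) ∂vol := by
    intro φ
    rw [e.measurableEmbedding.lintegral_map]
    refine lintegral_congr_ae ?_
    filter_upwards [e.measurableEmbedding.rnDeriv_map P vol] with x hx
    rw [hx]
  simp only [diffEntropy, hac, hlint Real.negMulLog, hlint fun t => -Real.negMulLog t]

lemma diffEntropy_map_const_fin_one {Ω : Type*} [MeasurableSpace Ω] {μ : Measure Ω}
    [IsFiniteMeasure μ] {X : Ω → ℝ} (hX : Measurable X) :
    diffEntropy volume (μ.map fun ω (_ : Fin 1) => X ω) = diffEntropy volume (μ.map X) := by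
  let e := (MeasurableEquiv.funUnique (Fin 1) ℝ).symm
  have he : (volume : Measure ℝ).map e = volume := by
    convert (volume_preserving_funUnique (Fin 1) ℝ).symm.map_eq
  have hXe : (fun ω (_ : Fin 1) => X ω) = e ∘ X := by
    ext ω i
    simp [e, MeasurableEquiv.funUnique, uniqueElim]
  rw [hXe, ← Measure.map_map e.measurable hX]
  conv_lhs => rw [← he]
  exact diffEntropy_map _ _ e

end Map

section Kappa

variable {N : ℕ} {x y : Fin N → ℝ}

lemma kappa_sub (x y : Fin N → ℝ) : kappa x - kappa y = kappa fun j => x j - y j := by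
  rw [kappa, kappa, kappa, Finset.sum_sub_distrib, sub_div]

lemma kappa_const_mul (c : ℝ) (x : Fin N → ℝ) : kappa (fun j => c * x j) = c * kappa x := by
  rw [kappa, kappa, ← Finset.mul_sum, mul_div_assoc]

lemma kappa_sum {ι : Type*} (s : Finset ι) (x : ι → Fin N → ℝ) :
    kappa (fun j => ∑ i ∈ s, x i j) = ∑ i ∈ s, kappa (x i) := by
  simp only [kappa, ← Finset.sum_div]
  rw [Finset.sum_comm]

lemma kappa_comp_perm (x : Fin N → ℝ) (σ : Equiv.Perm (Fin N)) :
    kappa (fun j => x (σ j)) = kappa x := by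
  rw [kappa, kappa, Equiv.sum_comp]

lemma kappa_mono (h : ∀ j, x j ≤ y j) : kappa x ≤ kappa y :=
  div_le_div_of_nonneg_right (Finset.sum_le_sum fun j _ => h j) (Nat.cast_nonneg N)

lemma abs_kappa_le_kappa_abs (x : Fin N → ℝ) : |kappa x| ≤ kappa fun j => |x j| := by
  rw [kappa, kappa, abs_div, Nat.abs_cast]
  exact div_le_div_of_nonneg_right (Finset.abs_sum_le_sum_abs _ _) (Nat.cast_nonneg N)

lemma kappa_le_of_le {c : ℝ} (hc : 0 ≤ c) (h : ∀ j, x j ≤ c) : kappa x ≤ c := by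
  refine div_le_of_le_mul₀ (Nat.cast_nonneg N) hc ?_
  simpa [mul_comm] using Finset.sum_le_card_nsmul Finset.univ x c fun j _ => h j

lemma abs_kappa_le {c : ℝ} (hc : 0 ≤ c) (h : ∀ j, |x j| ≤ c) : |kappa x| ≤ c :=
  (abs_kappa_le_kappa_abs x).trans (kappa_le_of_le hc h)

end Kappa

section SortedVectors

lemma totallyBounded_lipschitzWith_mapsTo_Icc {α : Type*} [PseudoMetricSpace α] [CompactSpace α]
    (K : NNReal) (a b : ℝ) :
    TotallyBounded
      {F : BoundedContinuousFunction α ℝ | LipschitzWith K F ∧ ∀ t, F t ∈ Set.Icc a b} :=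
  (BoundedContinuousFunction.arzela_ascoli (Set.Icc a b) isCompact_Icc _ (fun _ t hF => hF.2 t)
    (LipschitzWith.uniformEquicontinuous _ K fun hF => hF.2.1).equicontinuous).totallyBounded.subset
    subset_closure

open Polynomial in
lemma exists_finset_polynomial_near_lipschitz (R : ℝ) {ε : ℝ} (hε : 0 < ε) :
    ∃ T : Finset ℝ[X], ∀ f : ℝ → ℝ, LipschitzWith 1 f → f 0 = 0 →
      ∃ p ∈ T, ∀ t, |t| ≤ R → |f t - p.eval t| ≤ ε := by
  obtain ⟨C, hC, hcover⟩ := Metric.totallyBounded_iff.1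
    (totallyBounded_lipschitzWith_mapsTo_Icc (α := Set.Icc (-R) R) 1 (-R) R) (ε / 2) (half_pos hε)
  choose q hq using fun G : BoundedContinuousFunction (Set.Icc (-R) R) ℝ =>
    exists_polynomial_near_continuousMap (-R) R G.toContinuousMap (ε / 2) (half_pos hε)
  refine ⟨hC.toFinset.image q, fun f hf hf0 => ?_⟩
  let F : BoundedContinuousFunction (Set.Icc (-R) R) ℝ :=
    .mkOfCompact ⟨fun t => f t, hf.continuous.comp continuous_subtype_val⟩
  have hF : ∀ t, F t ∈ Set.Icc (-R) R := fun t => by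
    have hft : |f t| ≤ |(t : ℝ)| := by simpa [hf0, Real.dist_eq] using hf.dist_le_mul t 0
    exact abs_le.1 (hft.trans (abs_le.2 t.2))
  have hF1 : LipschitzWith 1 F := mul_one (1 : NNReal) ▸ hf.comp (LipschitzWith.subtype_val _)
  obtain ⟨G, hGC, hFG⟩ := Set.mem_iUnion₂.1 (hcover ⟨hF1, hF⟩)
  refine ⟨q G, Finset.mem_image_of_mem q (hC.mem_toFinset.2 hGC), fun t ht => ?_⟩
  have hfG : |f t - G ⟨t, abs_le.1 ht⟩| ≤ ε / 2 :=
    (BoundedContinuousFunction.dist_coe_le_dist ⟨t, abs_le.1 ht⟩).trans (Metric.mem_ball.1 hFG).le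
  have hqG : |(q G).eval t - G ⟨t, abs_le.1 ht⟩| ≤ ε / 2 :=
    (ContinuousMap.norm_coe_le_norm _ (⟨t, abs_le.1 ht⟩ : Set.Icc (-R) R)).trans (hq G).le
  rw [abs_sub_comm] at hqG
  linarith [abs_sub_le (f t) (G ⟨t, abs_le.1 ht⟩) ((q G).eval t)]

-- `f` has slope `1` on every `(y k, x k)` and `-1` elsewhere. As `x` and `y` are sorted, no
-- `(y k, x k)` meets an interval `(x j, y j)`.
lemma exists_lipschitz_sub_eq_abs_sub {ι : Type*} [LinearOrder ι] [Countable ι] {x y : ι → ℝ}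
    (hx : Monotone x) (hy : Monotone y) :
    ∃ f : ℝ → ℝ, LipschitzWith 1 f ∧ f 0 = 0 ∧ ∀ j, f (x j) - f (y j) = |x j - y j| := by
  let U : Set ℝ := ⋃ k, Set.Ioo (y k) (x k)
  let g : ℝ → ℝ := fun t => if t ∈ U then 1 else -1
  have hg : Measurable g :=
    .ite (.iUnion fun k => measurableSet_Ioo) measurable_const measurable_const
  have hg1 : ∀ t, ‖g t‖ ≤ 1 := fun t => by
    by_cases ht : t ∈ U <;> simp [g, ht]
  have hgint : ∀ a b, IntervalIntegrable g volume a b := fun a b =>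
    (intervalIntegrable_const (c := (1 : ℝ))).mono_fun hg.aestronglyMeasurable
      (ae_of_all _ fun t => by simpa using hg1 t)
  have hsub : ∀ a b, (∫ t in 0..a, g t) - ∫ t in 0..b, g t = ∫ t in b..a, g t := fun a b =>
    intervalIntegral.integral_interval_sub_left (hgint 0 a) (hgint 0 b)
  refine ⟨fun s => ∫ t in 0..s, g t, ?_, intervalIntegral.integral_same, fun j => ?_⟩
  · refine LipschitzWith.of_dist_le_mul fun a b => ?_
    rw [Real.dist_eq, hsub]
    exact intervalIntegral.norm_integral_le_of_norm_le_const fun t _ => hg1 t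
  · rw [hsub]
    rcases lt_or_ge (y j) (x j) with hlt | hle
    · have hgU : Set.EqOn g (fun _ => 1) (Set.Ioo (y j) (x j)) := fun t ht =>
        if_pos (Set.mem_iUnion.2 ⟨j, ht⟩)
      rw [intervalIntegral.integral_congr_Ioo_of_le hlt.le hgU]
      simp [abs_of_pos (sub_pos.2 hlt)]
    · have hgU : Set.EqOn g (fun _ => -1) (Set.Ioo (x j) (y j)) := fun t ht => by
        refine if_neg fun htU => ?_
        obtain ⟨k, hk⟩ := Set.mem_iUnion.1 htU
        exact lt_asymm (hx.reflect_lt (ht.1.trans hk.2)) (hy.reflect_lt (hk.1.trans ht.2))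
      rw [intervalIntegral.integral_symm, intervalIntegral.integral_congr_Ioo_of_le hle hgU]
      simp [abs_of_nonpos (sub_nonpos.2 hle)]

open Polynomial in
lemma abs_kappa_eval_sub_le {N : ℕ} {x y : Fin N → ℝ} (p : ℝ[X]) {η : ℝ} (hη : 0 ≤ η)
    (h : ∀ k, 1 ≤ k → k ≤ p.natDegree →
      |kappa (fun j => x j ^ k) - kappa (fun j => y j ^ k)| ≤ η) :
    |kappa (fun j => p.eval (x j)) - kappa (fun j => p.eval (y j))|
      ≤ (∑ k ∈ Finset.range (p.natDegree + 1), |p.coeff k|) * η := by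
  simp only [eval_eq_sum_range, kappa_sum, kappa_const_mul]
  rw [← Finset.sum_sub_distrib, Finset.sum_mul]
  refine (Finset.abs_sum_le_sum_abs _ _).trans (Finset.sum_le_sum fun k hk => ?_)
  rw [← mul_sub, abs_mul]
  refine mul_le_mul_of_nonneg_left ?_ (abs_nonneg _)
  rcases k.eq_zero_or_pos with rfl | hk0
  · simpa using hη
  · exact h k hk0 (Finset.mem_range_succ_iff.1 hk)

theorem exists_forall_kappa_abs_sub_le_of_moments (R : ℝ) {ε : ℝ} (hε : 0 < ε) :
    ∃ m : ℕ, ∃ η > 0, ∀ (N : ℕ) (x y : Fin N → ℝ), Monotone x → Monotone y →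
      (∀ j, |x j| ≤ R) → (∀ j, |y j| ≤ R) →
      (∀ k, 1 ≤ k → k ≤ m → |kappa (fun j => x j ^ k) - kappa (fun j => y j ^ k)| ≤ η) →
      kappa (fun j => |x j - y j|) ≤ ε := by
  obtain ⟨T, hT⟩ := exists_finset_polynomial_near_lipschitz R (show 0 < ε / 4 by positivity)
  let C : Polynomial ℝ → ℝ := fun p => ∑ k ∈ Finset.range (p.natDegree + 1), |p.coeff k|
  have hC : ∀ p, 0 ≤ C p := fun p => Finset.sum_nonneg fun k _ => abs_nonneg _
  have hCT : 0 ≤ ∑ p ∈ T, C p := Finset.sum_nonneg fun p _ => hC p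
  have hη : 0 < ε / (2 * (∑ p ∈ T, C p + 1)) := by positivity
  refine ⟨T.sup Polynomial.natDegree, _, hη, fun N x y hx hy hxR hyR hmom => ?_⟩
  obtain ⟨f, hf, hf0, hfxy⟩ := exists_lipschitz_sub_eq_abs_sub hx hy
  obtain ⟨p, hpT, hfp⟩ := hT f hf hf0
  have hpCη : C p * (ε / (2 * (∑ p ∈ T, C p + 1))) ≤ ε / 2 := by
    have hCp : C p ≤ ∑ p ∈ T, C p + 1 :=
      (Finset.single_le_sum (fun p _ => hC p) hpT).trans (le_add_of_nonneg_right zero_le_one)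
    calc C p * (ε / (2 * (∑ p ∈ T, C p + 1)))
      _ ≤ (∑ p ∈ T, C p + 1) * (ε / (2 * (∑ p ∈ T, C p + 1))) := by gcongr
      _ = ε / 2 := by field_simp
  have hpoly := abs_kappa_eval_sub_le p hη.le fun k hk hkp =>
    hmom k hk (hkp.trans (Finset.le_sup (f := Polynomial.natDegree) hpT))
  have hnear : ∀ z : Fin N → ℝ, (∀ j, |z j| ≤ R) →
      |kappa (fun j => f (z j)) - kappa (fun j => p.eval (z j))| ≤ ε / 4 := fun z hz => by
    rw [kappa_sub]
    exact abs_kappa_le (by positivity) fun j => hfp (z j) (hz j)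
  have hdual : kappa (fun j => |x j - y j|)
      = kappa (fun j => f (x j)) - kappa (fun j => f (y j)) := by
    simp only [kappa_sub, hfxy]
  linarith [abs_le.1 (hnear x hxR), abs_le.1 (hnear y hyR), abs_le.1 hpoly]

lemma abs_prod_sub_prod_le {ι : Type*} {a b : ι → ℝ} {C : ℝ} (hC : 1 ≤ C) (s : Finset ι)
    (ha : ∀ i, |a i| ≤ C) (hb : ∀ i, |b i| ≤ C) :
    |∏ i ∈ s, a i - ∏ i ∈ s, b i| ≤ C ^ s.card * ∑ i ∈ s, |a i - b i| := by
  induction s using Finset.induction_on with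
  | empty => simp
  | insert i s hi ih =>
    have : 0 ≤ C := zero_le_one.trans hC
    have hbs : |∏ j ∈ s, b j| ≤ C ^ s.card := by
      rw [Finset.abs_prod]
      exact (Finset.prod_le_prod (fun j _ => abs_nonneg _) fun j _ => hb j).trans_eq
        (Finset.prod_const C)
    rw [Finset.prod_insert hi, Finset.prod_insert hi, Finset.sum_insert hi,
      Finset.card_insert_of_notMem hi]
    calc |a i * ∏ j ∈ s, a j - b i * ∏ j ∈ s, b j|
      _ = |a i * (∏ j ∈ s, a j - ∏ j ∈ s, b j) + (a i - b i) * ∏ j ∈ s, b j| := by ring_nf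
      _ ≤ |a i| * |∏ j ∈ s, a j - ∏ j ∈ s, b j| + |a i - b i| * |∏ j ∈ s, b j| := by
        rw [← abs_mul, ← abs_mul]
        exact abs_add_le _ _
      _ ≤ C * (C ^ s.card * ∑ j ∈ s, |a j - b j|) + |a i - b i| * C ^ (s.card + 1) := by
        have hpow : C ^ s.card ≤ C ^ (s.card + 1) := pow_le_pow_right₀ hC s.card.le_succ
        gcongr
        · exact ha i
        · exact hbs.trans hpow
      _ = C ^ (s.card + 1) * (|a i - b i| + ∑ j ∈ s, |a j - b j|) := by ring

end SortedVectors

section Chambers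

variable {n N : ℕ}

/-- The action of `S_N^n` on `n`-tuples of vectors, `σ_i` permuting the coordinates of the `i`-th
vector; the inverse makes it a left action, with the convention of `DeltaSymR`. -/
def permute (σ : Fin n → Equiv.Perm (Fin N)) (x : Fin n → Fin N → ℝ) : Fin n → Fin N → ℝ :=
  fun i j => x i ((σ i)⁻¹ j)

/-- The image under `σ` of the cone of tuples of nondecreasing vectors; these closed Weyl chambers
tile the space of tuples up to null sets. -/
def chamber (σ : Fin n → Equiv.Perm (Fin N)) : Set (Fin n → Fin N → ℝ) :=
  {x | ∀ i, Monotone fun j => x i (σ i j)}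

lemma measurePreserving_permute (σ : Fin n → Equiv.Perm (Fin N)) :
    MeasurePreserving (permute σ) volume volume := by
  refine volume_preserving_pi (f := fun i (a : Fin N → ℝ) j => a ((σ i)⁻¹ j)) fun i => ?_
  convert volume_measurePreserving_piCongrLeft (fun _ : Fin N => ℝ) (σ i) using 1
  ext a j
  simpa using (MeasurableEquiv.piCongrLeft_apply_apply (σ i) (β := fun _ : Fin N => ℝ) a
    ((σ i)⁻¹ j)).symm

lemma preimage_permute_inv_chamber_one (σ : Fin n → Equiv.Perm (Fin N)) :
    permute σ⁻¹ ⁻¹' chamber 1 = chamber σ := by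
  ext x
  simp [permute, chamber]

lemma measurableSet_chamber (σ : Fin n → Equiv.Perm (Fin N)) : MeasurableSet (chamber σ) := by
  have hclosed : IsClosed (chamber σ) := by
    simp only [chamber, Monotone, Set.ofPred_forall]
    exact isClosed_iInter fun i => isClosed_iInter fun a => isClosed_iInter fun b =>
      isClosed_iInter fun _ => isClosed_le (by fun_prop) (by fun_prop)
  exact hclosed.measurableSet

lemma volume_setOf_coord_eq (i : Fin n) {j k : Fin N} (hjk : j ≠ k) :
    volume {x : Fin n → Fin N → ℝ | x i j = x i k} = 0 := by
  let coord (j : Fin N) : (Fin n → Fin N → ℝ) →ₗ[ℝ] ℝ :=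
    { toFun := fun x => x i j, map_add' := fun _ _ => rfl, map_smul' := fun _ _ => rfl }
  let f := coord j - coord k
  have hf : LinearMap.ker f ≠ ⊤ := fun h => by
    have hmem : (fun _ => Pi.single j 1 : Fin n → Fin N → ℝ) ∈ LinearMap.ker f := h ▸ trivial
    simp [f, coord, hjk.symm] at hmem
  convert Measure.addHaar_submodule volume (LinearMap.ker f) hf using 2
  ext x
  simp [f, coord, sub_eq_zero]

lemma aedisjoint_chamber {σ τ : Fin n → Equiv.Perm (Fin N)} (h : σ ≠ τ) :
    AEDisjoint volume (chamber σ) (chamber τ) := by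
  have hsub : chamber σ ∩ chamber τ ⊆ ⋃ (i : Fin n) (j : Fin N) (k : Fin N) (_ : j ≠ k),
      {x : Fin n → Fin N → ℝ | x i j = x i k} := by
    rintro x ⟨hσ, hτ⟩
    by_contra hinj
    simp only [Set.mem_iUnion, Set.mem_ofPred_eq, not_exists] at hinj
    refine h (funext fun i => Equiv.ext fun j => ?_)
    have hval : x i (σ i j) = x i (τ i j) :=
      congrFun (Tuple.unique_monotone (f := x i) (σ := σ i) (τ := τ i) (hσ i) (hτ i)) j
    by_contra hne
    exact hinj i _ _ hne hval
  refine measure_mono_null hsub ?_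
  simp only [measure_iUnion_null_iff]
  exact fun i j k => volume_setOf_coord_eq i

lemma iUnion_chamber : ⋃ σ, chamber σ = (Set.univ : Set (Fin n → Fin N → ℝ)) :=
  Set.eq_univ_of_forall fun x =>
    Set.mem_iUnion.2 ⟨fun i => Tuple.sort (x i), fun i => Tuple.monotone_sort (x i)⟩

variable {D : Set (Fin n → Fin N → ℝ)} (hD : MeasurableSet D)
  (hinv : ∀ σ, permute σ ⁻¹' D = D)

include hD hinv

lemma volume_inter_chamber (σ : Fin n → Equiv.Perm (Fin N)) :
    volume (D ∩ chamber σ) = volume (D ∩ chamber 1) := by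
  calc volume (D ∩ chamber σ) = volume (permute σ⁻¹ ⁻¹' (D ∩ chamber 1)) := by
        rw [Set.preimage_inter, hinv, preimage_permute_inv_chamber_one]
    _ = volume (D ∩ chamber 1) := (measurePreserving_permute _).measure_preimage
        (hD.inter (measurableSet_chamber 1)).nullMeasurableSet

lemma volume_inter_biUnion_chamber_eq_card_mul (S : Set (Fin n → Equiv.Perm (Fin N))) :
    volume (D ∩ ⋃ σ ∈ S, chamber σ) = Nat.card S * volume (D ∩ chamber 1) := by
  have hS : D ∩ ⋃ σ ∈ S, chamber σ = ⋃ σ ∈ S.toFinset, D ∩ chamber σ := by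
    simp [Set.inter_iUnion₂]
  rw [hS, measure_biUnion_finset₀
    (fun σ _ τ _ h => (aedisjoint_chamber h).mono Set.inter_subset_right Set.inter_subset_right)
    (fun σ _ => (hD.inter (measurableSet_chamber σ)).nullMeasurableSet),
    Finset.sum_congr rfl fun σ _ => volume_inter_chamber hD hinv σ]
  simp

lemma measureReal_inter_biUnion_chamber (S : Set (Fin n → Equiv.Perm (Fin N))) :
    volume.real (D ∩ ⋃ σ ∈ S, chamber σ)
      = Nat.card S / (N.factorial : ℝ) ^ n * volume.real D := by
  have htotal : volume.real D = (N.factorial : ℝ) ^ n * volume.real (D ∩ chamber 1) := by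
    have h := volume_inter_biUnion_chamber_eq_card_mul hD hinv Set.univ
    rw [Set.biUnion_univ, iUnion_chamber, Set.inter_univ] at h
    simp [measureReal_def, h, Nat.card_eq_fintype_card, Fintype.card_perm]
  rw [htotal, measureReal_def, volume_inter_biUnion_chamber_eq_card_mul hD hinv,
    ENNReal.toReal_mul, ENNReal.toReal_natCast, ← measureReal_def]
  field_simp

end Chambers

lemma abs_kappa_prod_sub_le {n N k : ℕ} {x y : Fin n → Fin N → ℝ} {C ε : ℝ} (hC : 1 ≤ C)
    (hx : ∀ i j, |x i j| ≤ C) (hy : ∀ i j, |y i j| ≤ C)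
    (h : ∀ i, kappa (fun j => |x i j - y i j|) ≤ ε) (idx : Fin k → Fin n) :
    |kappa (fun j => ∏ l, x (idx l) j) - kappa (fun j => ∏ l, y (idx l) j)|
      ≤ C ^ k * (k * ε) := by
  rw [kappa_sub]
  calc |kappa fun j => ∏ l, x (idx l) j - ∏ l, y (idx l) j|
      ≤ kappa fun j => |∏ l, x (idx l) j - ∏ l, y (idx l) j| := abs_kappa_le_kappa_abs _
    _ ≤ kappa fun j => C ^ k * ∑ l, |x (idx l) j - y (idx l) j| :=
        kappa_mono fun j => by
          simpa using abs_prod_sub_prod_le hC Finset.univ (fun l => hx (idx l) j)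
            fun l => hy (idx l) j
    _ = C ^ k * ∑ l, kappa (fun j => |x (idx l) j - y (idx l) j|) := by
        rw [kappa_const_mul, kappa_sum Finset.univ fun l j => |x (idx l) j - y (idx l) j|]
    _ ≤ C ^ k * (k * ε) := by
        gcongr
        simpa using Finset.sum_le_card_nsmul Finset.univ
          (fun l => kappa fun j => |x (idx l) j - y (idx l) j|) ε fun l _ => h (idx l)

section Microstates

variable {Ω : Type*} [MeasurableSpace Ω] {μ : Measure Ω} {n : ℕ} {X : Fin n → Ω → ℝ} {R : ℝ}
  {N m m' : ℕ} {δ δ' : ℝ}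

variable (μ X R N m δ) in
/-- The product of the one-variable micro-state sets of `X₁, …, Xₙ`. -/
def marginalDeltaR : Set (Fin n → Fin N → ℝ) :=
  {x | ∀ i, (fun _ : Fin 1 => x i) ∈ DeltaR μ (fun _ : Fin 1 => X i) R N m δ}

variable (μ X R N m δ) in
/-- The union of `σ(Δ_R(X₁) × ⋯ × Δ_R(Xₙ) ∩ ℝ^N_≤ × ⋯ × ℝ^N_≤)` over the permutation
micro-states `σ`, written without a `σ`-action since a product of one-variable micro-state sets is
invariant under permutations. -/
def sortedDeltaR : Set (Fin n → Fin N → ℝ) :=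
  marginalDeltaR μ X R N m δ ∩ ⋃ σ ∈ DeltaSymR μ X R N m δ, chamber σ

lemma mem_marginalDeltaR {x : Fin n → Fin N → ℝ} :
    x ∈ marginalDeltaR μ X R N m δ ↔ (∀ i j, |x i j| ≤ R) ∧ ∀ i k, 1 ≤ k → k ≤ m →
      |kappa (fun j => x i j ^ k) - ∫ ω, X i ω ^ k ∂μ| < δ := by
  simp only [marginalDeltaR, DeltaR, Set.mem_ofPred_eq, Finset.prod_const, Finset.card_univ,
    Fintype.card_fin, forall_const, forall_and]

lemma DeltaR_subset (hm : m ≤ m') (hδ : δ' ≤ δ) :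
    DeltaR μ X R N m' δ' ⊆ DeltaR μ X R N m δ := fun _ hx =>
  ⟨hx.1, fun k h1 hk idx => (hx.2 k h1 (hk.trans hm) idx).trans_le hδ⟩

lemma DeltaSymR_subset (hm : m ≤ m') (hδ : δ' ≤ δ) :
    DeltaSymR μ X R N m' δ' ⊆ DeltaSymR μ X R N m δ := fun _ ⟨x, hmono, hx⟩ =>
  ⟨x, hmono, DeltaR_subset hm hδ hx⟩

lemma marginalDeltaR_subset (hm : m ≤ m') (hδ : δ' ≤ δ) :
    marginalDeltaR μ X R N m' δ' ⊆ marginalDeltaR μ X R N m δ := fun _ hx i =>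
  DeltaR_subset hm hδ (hx i)

lemma sortedDeltaR_subset (hm : m ≤ m') (hδ : δ' ≤ δ) :
    sortedDeltaR μ X R N m' δ' ⊆ sortedDeltaR μ X R N m δ :=
  Set.inter_subset_inter (marginalDeltaR_subset hm hδ)
    (Set.biUnion_subset_biUnion_left (DeltaSymR_subset hm hδ))

lemma DeltaR_subset_marginalDeltaR : DeltaR μ X R N m δ ⊆ marginalDeltaR μ X R N m δ :=
  fun _ hx i => ⟨fun _ => hx.1 i, fun k h1 hk _ => hx.2 k h1 hk fun _ => i⟩

lemma mem_DeltaSymR_iff {σ : Fin n → Equiv.Perm (Fin N)} :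
    σ ∈ DeltaSymR μ X R N m δ ↔ (DeltaR μ X R N m δ ∩ chamber σ).Nonempty := by
  constructor
  · rintro ⟨x, hmono, hx⟩
    exact ⟨_, hx, by simpa [chamber] using hmono⟩
  · rintro ⟨x, hx, hσ⟩
    exact ⟨fun i j => x i (σ i j), hσ, by simpa using hx⟩

lemma DeltaR_subset_sortedDeltaR : DeltaR μ X R N m δ ⊆ sortedDeltaR μ X R N m δ := by
  intro x hx
  obtain ⟨σ, hσ⟩ := Set.mem_iUnion.1 (iUnion_chamber ▸ Set.mem_univ x)
  exact ⟨DeltaR_subset_marginalDeltaR hx,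
    Set.mem_biUnion (mem_DeltaSymR_iff.2 ⟨x, hx, hσ⟩) hσ⟩

variable (μ X R) in
lemma exists_kappa_abs_sub_le_of_mem_chamber {ε : ℝ} (hε : 0 < ε) :
    ∃ m : ℕ, ∃ δ > 0, ∀ (N : ℕ) (σ : Fin n → Equiv.Perm (Fin N)),
      ∀ x ∈ marginalDeltaR μ X R N m δ ∩ chamber σ, ∀ y ∈ marginalDeltaR μ X R N m δ ∩ chamber σ,
        ∀ i, kappa (fun j => |x i j - y i j|) ≤ ε := by
  obtain ⟨m, η, hη, hclose⟩ := exists_forall_kappa_abs_sub_le_of_moments R hε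
  refine ⟨m, η / 2, half_pos hη, fun N σ x hx y hy i => ?_⟩
  obtain ⟨hxR, hxmom⟩ := mem_marginalDeltaR.1 hx.1
  obtain ⟨hyR, hymom⟩ := mem_marginalDeltaR.1 hy.1
  rw [← kappa_comp_perm _ (σ i)]
  refine hclose N _ _ (hx.2 i) (hy.2 i) (fun _ => hxR _ _) (fun _ => hyR _ _) fun k h1 hk => ?_
  rw [kappa_comp_perm (fun j => x i j ^ k), kappa_comp_perm (fun j => y i j ^ k)]
  have hdist := abs_sub_le (kappa fun j => x i j ^ k) (∫ ω, X i ω ^ k ∂μ)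
    (kappa fun j => y i j ^ k)
  rw [abs_sub_comm (∫ ω, X i ω ^ k ∂μ)] at hdist
  linarith [hxmom i k h1 hk, hymom i k h1 hk]

variable (μ X R) in
lemma exists_sortedDeltaR_subset_DeltaR (m : ℕ) (hδ : 0 < δ) :
    ∃ m' : ℕ, ∃ δ' > 0, ∀ N, sortedDeltaR μ X R N m' δ' ⊆ DeltaR μ X R N m δ := by
  set C := max 1 R
  have hC : 1 ≤ C := le_max_left _ _
  set ε := δ / (2 * C ^ m * (m + 1)) with hε_def
  have hε : 0 < ε := by positivity
  obtain ⟨m₀, δ₀, hδ₀, hclose⟩ := exists_kappa_abs_sub_le_of_mem_chamber μ X R hε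
  refine ⟨max m m₀, min (δ / 2) δ₀, lt_min (half_pos hδ) hδ₀, ?_⟩
  rintro N x ⟨hx, hxσ⟩
  obtain ⟨σ, hσ, hxσ⟩ := Set.mem_iUnion₂.1 hxσ
  obtain ⟨y, hy, hyσ⟩ := mem_DeltaSymR_iff.1 hσ
  have hclose_xy : ∀ i, kappa (fun j => |x i j - y i j|) ≤ ε :=
    have hsub := marginalDeltaR_subset (le_max_right m m₀) (min_le_right (δ / 2) δ₀)
    hclose N σ x ⟨hsub hx, hxσ⟩ y ⟨hsub (DeltaR_subset_marginalDeltaR hy), hyσ⟩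
  have hxR := (mem_marginalDeltaR.1 hx).1
  refine ⟨hxR, fun k h1 hk idx => ?_⟩
  have hy_moment := (hy.2 k h1 (hk.trans (le_max_left m m₀)) idx).trans_le (min_le_left _ _)
  have hxy_moment : |kappa (fun j => ∏ l, x (idx l) j) - kappa (fun j => ∏ l, y (idx l) j)|
      ≤ δ / 2 :=
    calc _ ≤ C ^ k * (k * ε) :=
          abs_kappa_prod_sub_le hC (fun i j => (hxR i j).trans (le_max_right _ _))
            (fun i j => (hy.1 i j).trans (le_max_right _ _)) hclose_xy idx
      _ ≤ C ^ m * ((m + 1) * ε) := by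
          gcongr
          exact_mod_cast hk.trans m.le_succ
      _ = δ / 2 := by rw [hε_def]; field_simp
  exact (abs_sub_le _ _ _).trans_lt (by linarith)

lemma measurableSet_marginalDeltaR : MeasurableSet (marginalDeltaR μ X R N m δ) := by
  have hset : marginalDeltaR μ X R N m δ = {x | (∀ i j, |x i j| ≤ R) ∧ ∀ i k, 1 ≤ k → k ≤ m →
      |kappa (fun j => x i j ^ k) - ∫ ω, X i ω ^ k ∂μ| < δ} := Set.ext fun _ => mem_marginalDeltaR
  rw [hset]
  unfold kappa
  simp only [Set.ofPred_and, Set.ofPred_forall]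
  refine (MeasurableSet.iInter fun i => MeasurableSet.iInter fun j => ?_).inter
    (MeasurableSet.iInter fun i => MeasurableSet.iInter fun k => MeasurableSet.iInter fun _ =>
      MeasurableSet.iInter fun _ => ?_)
  · exact measurableSet_le (by fun_prop) (by fun_prop)
  · exact measurableSet_lt (by fun_prop) (by fun_prop)

lemma preimage_permute_marginalDeltaR (σ : Fin n → Equiv.Perm (Fin N)) :
    permute σ ⁻¹' marginalDeltaR μ X R N m δ = marginalDeltaR μ X R N m δ := by
  ext x
  rw [Set.mem_preimage, mem_marginalDeltaR, mem_marginalDeltaR]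
  refine and_congr (forall_congr' fun i => (σ i)⁻¹.forall_congr_right (q := fun j => |x i j| ≤ R))
    (forall_congr' fun i => forall_congr' fun k => ?_)
  have hkappa : kappa (fun j => permute σ x i j ^ k) = kappa fun j => x i j ^ k :=
    kappa_comp_perm (fun j => x i j ^ k) (σ i)⁻¹
  rw [hkappa]

lemma volume_DeltaR_ne_top : volume (DeltaR μ X R N m δ) ≠ ⊤ := by
  have hsub : DeltaR μ X R N m δ ⊆ Metric.closedBall 0 (max R 0) := fun x hx => by
    simp only [mem_closedBall_zero_iff, pi_norm_le_iff_of_nonneg (le_max_right R 0)]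
    exact fun i j => (hx.1 i j).trans (le_max_left R 0)
  exact measure_ne_top_of_subset hsub measure_closedBall_lt_top.ne

lemma volume_DeltaR_ne_zero (hR : Fin n → 0 < R) {N m : ℕ} {δ : ℝ}
    (hne : (DeltaR μ X R N m δ).Nonempty) : volume (DeltaR μ X R N m δ) ≠ 0 := by
  obtain ⟨x, hxR, hx⟩ := hne
  obtain ⟨r, hr, hrR⟩ : ∃ r > 0, ∀ _ : Fin n, r = R := by
    rcases isEmpty_or_nonempty (Fin n) with h | ⟨⟨i⟩⟩
    · exact ⟨1, one_pos, fun i => h.elim i⟩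
    · exact ⟨R, hR i, fun _ => rfl⟩
  let V : Set (Fin n → Fin N → ℝ) := {y | ∀ k ∈ Set.Icc 1 m, ∀ idx : Fin k → Fin n,
    |kappa (fun j => ∏ l, y (idx l) j) - ∫ ω, ∏ l, X (idx l) ω ∂μ| < δ}
  have hV : IsOpen V := by
    simp only [V, Set.ofPred_forall, kappa]
    exact (Set.finite_Icc 1 m).isOpen_biInter fun k _ => isOpen_iInter_of_finite fun idx =>
      isOpen_lt (by fun_prop) (by fun_prop)
  have hx_closure : x ∈ closure (Metric.ball 0 r) := by
    rw [closure_ball 0 hr.ne', mem_closedBall_zero_iff, pi_norm_le_iff_of_nonneg hr.le]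
    intro i
    rw [pi_norm_le_iff_of_nonneg hr.le]
    exact fun j => (hxR i j).trans_eq (hrR i).symm
  have hsub : V ∩ Metric.ball 0 r ⊆ DeltaR μ X R N m δ := fun y ⟨hyV, hyr⟩ =>
    ⟨fun i j => ((norm_le_pi_norm (y i) j).trans (norm_le_pi_norm y i)).trans
      ((mem_ball_zero_iff.1 hyr).le.trans_eq (hrR i)), fun k h1 hk idx => hyV k ⟨h1, hk⟩ idx⟩
  have hpos := (hV.inter Metric.isOpen_ball).measure_pos volume
    (mem_closure_iff.1 hx_closure V hV fun k hk idx => hx k hk.1 hk.2 idx)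
  exact (hpos.trans_le (measure_mono hsub)).ne'

lemma volume_marginalDeltaR : volume (marginalDeltaR μ X R N m δ)
    = ∏ i, volume (DeltaR μ (fun _ : Fin 1 => X i) R N m δ) := by
  have hpi : marginalDeltaR μ X R N m δ = Set.univ.pi fun i =>
      {y : Fin N → ℝ | (fun _ : Fin 1 => y) ∈ DeltaR μ (fun _ : Fin 1 => X i) R N m δ} := by
    ext x
    simp [marginalDeltaR, Set.mem_pi]
  rw [hpi, volume_pi_pi]
  exact Finset.prod_congr rfl fun i _ =>
    (volume_preserving_funUnique (Fin 1) (Fin N → ℝ)).symm.measure_preimage_equiv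
      (DeltaR μ (fun _ : Fin 1 => X i) R N m δ)

lemma volume_sortedDeltaR_ne_top : volume (sortedDeltaR μ X R N m δ) ≠ ⊤ := by
  refine measure_ne_top_of_subset Set.inter_subset_left ?_
  rw [volume_marginalDeltaR]
  exact ENNReal.prod_ne_top fun _ _ => volume_DeltaR_ne_top

lemma measureReal_sortedDeltaR : volume.real (sortedDeltaR μ X R N m δ)
    = Nat.card (DeltaSymR μ X R N m δ) / (N.factorial : ℝ) ^ n
      * ∏ i, volume.real (DeltaR μ (fun _ : Fin 1 => X i) R N m δ) := by
  rw [sortedDeltaR, measureReal_inter_biUnion_chamber measurableSet_marginalDeltaR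
    preimage_permute_marginalDeltaR]
  simp only [measureReal_def, volume_marginalDeltaR, ENNReal.toReal_prod]

lemma symQ_add_sum_volQ (hpos : volume (sortedDeltaR μ X R N m δ) ≠ 0) :
    symQ μ X R N m δ + ∑ i, volQ μ (fun _ : Fin 1 => X i) R N m δ
      = Real.log (volume.real (sortedDeltaR μ X R N m δ)) / N := by
  have hne : volume.real (sortedDeltaR μ X R N m δ) ≠ 0 :=
    (ENNReal.toReal_pos hpos volume_sortedDeltaR_ne_top).ne'
  rw [measureReal_sortedDeltaR] at hne ⊢
  rw [Real.log_mul (left_ne_zero_of_mul hne) (right_ne_zero_of_mul hne),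
    Real.log_prod (Finset.prod_ne_zero_iff.1 (right_ne_zero_of_mul hne)), add_div,
    Finset.sum_div]
  rfl

lemma log_measureReal_div_le {E : Type*} [MeasurableSpace E] {ν : Measure E} {s t : Set E}
    (hst : s ⊆ t) (hs : ν s ≠ 0) (ht : ν t ≠ ⊤) (N : ℕ) :
    Real.log (ν.real s) / N ≤ Real.log (ν.real t) / N :=
  div_le_div_of_nonneg_right
    (Real.log_le_log (ENNReal.toReal_pos hs (measure_ne_top_of_subset hst ht))
      (measureReal_mono hst ht)) (Nat.cast_nonneg N)

lemma volQ_le_symQ_add_sum_volQ (hpos : volume (DeltaR μ X R N m δ) ≠ 0) :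
    volQ μ X R N m δ ≤ symQ μ X R N m δ + ∑ i, volQ μ (fun _ : Fin 1 => X i) R N m δ := by
  have hsub : DeltaR μ X R N m δ ⊆ sortedDeltaR μ X R N m δ := DeltaR_subset_sortedDeltaR
  rw [symQ_add_sum_volQ fun h => hpos (measure_mono_null hsub h)]
  exact log_measureReal_div_le hsub hpos volume_sortedDeltaR_ne_top N

lemma symQ_add_sum_volQ_le (hsub : sortedDeltaR μ X R N m' δ' ⊆ DeltaR μ X R N m δ)
    (hpos : volume (DeltaR μ X R N m' δ') ≠ 0) :
    symQ μ X R N m' δ' + ∑ i, volQ μ (fun _ : Fin 1 => X i) R N m' δ' ≤ volQ μ X R N m δ := by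
  have hpos' : volume (sortedDeltaR μ X R N m' δ') ≠ 0 := fun h =>
    hpos (measure_mono_null DeltaR_subset_sortedDeltaR h)
  rw [symQ_add_sum_volQ hpos']
  exact log_measureReal_div_le hsub hpos' volume_DeltaR_ne_top N

lemma volQ_le_volQ (hm : m ≤ m') (hδ : δ' ≤ δ) (hpos : volume (DeltaR μ X R N m' δ') ≠ 0) :
    volQ μ X R N m' δ' ≤ volQ μ X R N m δ :=
  log_measureReal_div_le (DeltaR_subset hm hδ) hpos volume_DeltaR_ne_top N

lemma symQ_le_symQ (hm : m ≤ m') (hδ : δ' ≤ δ) (hne : (DeltaR μ X R N m' δ').Nonempty) :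
    symQ μ X R N m' δ' ≤ symQ μ X R N m δ := by
  obtain ⟨x, hx⟩ := hne
  obtain ⟨σ, hσ, -⟩ := Set.mem_iUnion₂.1 (DeltaR_subset_sortedDeltaR hx).2
  have hcard : 0 < Nat.card (DeltaSymR μ X R N m' δ') :=
    Nat.card_pos_iff.2 ⟨⟨σ, hσ⟩, inferInstance⟩
  have hcard_le : Nat.card (DeltaSymR μ X R N m' δ') ≤ Nat.card (DeltaSymR μ X R N m δ) :=
    Nat.card_mono (Set.toFinite _) (DeltaSymR_subset hm hδ)
  unfold symQ
  gcongr

end Microstates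

section Sampling

variable {Ω : Type*} [MeasurableSpace Ω] {μ : Measure Ω} {n : ℕ} {X : Fin n → Ω → ℝ} {R : ℝ}

lemma integrable_prod_of_ae_abs_le [IsFiniteMeasure μ] (hX : ∀ i, Measurable (X i))
    (hXR : ∀ i, ∀ᵐ ω ∂μ, |X i ω| ≤ R) {k : ℕ} (idx : Fin k → Fin n) :
    Integrable (fun ω => ∏ l, X (idx l) ω) μ := by
  refine .of_bound (Finset.measurable_fun_prod _ fun l _ => hX _).aestronglyMeasurable (R ^ k) ?_
  filter_upwards [ae_all_iff.2 hXR] with ω hω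
  rw [Real.norm_eq_abs, Finset.abs_prod]
  simpa using Finset.prod_le_prod (s := Finset.univ) (fun l _ => abs_nonneg (X (idx l) ω))
    fun l _ => hω (idx l)

variable [IsProbabilityMeasure μ]

lemma ae_tendsto_kappa_infinitePi {f : Ω → ℝ} (hf : Measurable f) (hint : Integrable f μ) :
    ∀ᵐ s ∂Measure.infinitePi fun _ : ℕ => μ,
      Tendsto (fun N : ℕ => kappa fun j : Fin N => f (s j)) atTop (nhds (∫ ω, f ω ∂μ)) := by
  set P : Measure (ℕ → Ω) := Measure.infinitePi fun _ => μ
  have heval (i : ℕ) : MeasurePreserving (fun s : ℕ → Ω => s i) P μ :=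
    measurePreserving_eval_infinitePi _ i
  have hindep := ProbabilityTheory.iIndepFun_infinitePi (P := fun _ : ℕ => μ)
    (X := fun _ => f) fun _ => hf
  have hident (i : ℕ) : ProbabilityTheory.IdentDistrib (fun s : ℕ → Ω => f (s i))
      (fun s => f (s 0)) P P := by
    refine ProbabilityTheory.IdentDistrib.comp (u := f) ⟨?_, ?_, ?_⟩ hf
    · exact (heval i).measurable.aemeasurable
    · exact (heval 0).measurable.aemeasurable
    · exact (heval i).map_eq.trans (heval 0).map_eq.symm
  have hmean : ∫ s, f (s 0) ∂P = ∫ ω, f ω ∂μ := by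
    rw [← (heval 0).map_eq,
      integral_map (heval 0).measurable.aemeasurable hf.aestronglyMeasurable]
  filter_upwards [ProbabilityTheory.strong_law_ae_real (fun j (s : ℕ → Ω) => f (s j))
    ((heval 0).integrable_comp_of_integrable hint) (fun i j hij => hindep.indepFun hij) hident]
    with s hs
  simpa only [kappa, Finset.sum_range, hmean] using hs

lemma eventually_nonempty_DeltaR (hX : ∀ i, Measurable (X i))
    (hXR : ∀ i, ∀ᵐ ω ∂μ, |X i ω| ≤ R) (m : ℕ) {δ : ℝ} (hδ : 0 < δ) :
    ∀ᶠ N : ℕ in atTop, (DeltaR μ X R N m δ).Nonempty := by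
  have hbound : ∀ᵐ s ∂Measure.infinitePi fun _ : ℕ => μ, ∀ i j, |X i (s j)| ≤ R :=
    ae_all_iff.2 fun i => ae_all_iff.2 fun j =>
      (measurePreserving_eval_infinitePi (fun _ => μ) j).quasiMeasurePreserving.ae (hXR i)
  have hmean : ∀ᵐ s ∂Measure.infinitePi fun _ : ℕ => μ, ∀ (k : ℕ) (idx : Fin k → Fin n),
      Tendsto (fun N : ℕ => kappa fun j : Fin N => ∏ l, X (idx l) (s j)) atTop
        (nhds (∫ ω, ∏ l, X (idx l) ω ∂μ)) :=
    ae_all_iff.2 fun k => ae_all_iff.2 fun idx => ae_tendsto_kappa_infinitePi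
      (Finset.measurable_fun_prod _ fun l _ => hX _) (integrable_prod_of_ae_abs_le hX hXR idx)
  obtain ⟨s, hsR, hs⟩ := (hbound.and hmean).exists
  have hmoments : ∀ᶠ N : ℕ in atTop, ∀ k ∈ Set.Iic m, ∀ idx : Fin k → Fin n,
      |kappa (fun j : Fin N => ∏ l, X (idx l) (s j)) - ∫ ω, ∏ l, X (idx l) ω ∂μ| < δ :=
    ((Set.finite_Iic m).eventually_all).2 fun k _ => eventually_all.2 fun idx =>
      Metric.tendsto_nhds.1 (hs k idx) δ hδ
  filter_upwards [hmoments] with N hN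
  exact ⟨fun i j => X i (s j), fun i j => hsR i j, fun k _ hk idx => hN k hk idx⟩

end Sampling

section IteratedLimit

/-- The iterated limit `m → ∞`, `δ → 0+`, taken after `N → ∞`, along triples `((m, δ), N)`. -/
def microstateFilter : Filter ((ℕ × ℝ) × ℕ) :=
  (atTop ×ˢ nhdsWithin 0 (Set.Ioi 0)).curry atTop

lemma eventually_microstateFilter_iff {p : (ℕ × ℝ) × ℕ → Prop} :
    (∀ᶠ t in microstateFilter, p t) ↔ ∃ m : ℕ, ∃ δ > 0, ∀ m' ≥ m, ∀ δ' ∈ Set.Ioc 0 δ,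
      ∀ᶠ N : ℕ in atTop, p ((m', δ'), N) := by
  rw [microstateFilter, eventually_curry_iff,
    (atTop_basis.prod (nhdsGT_basis_Ioc (0 : ℝ))).eventually_iff]
  simp only [true_and, Prod.exists, Prod.forall, Set.mem_prod, and_imp, Set.mem_Ici, gt_iff_lt,
    ge_iff_le]
  exact exists₂_congr fun m δ => and_congr_right fun _ => forall_congr' fun _ => forall_comm

variable {Q : ℕ → ℝ → ℕ → EReal} {L : EReal}
  (hanti : ∀ ⦃m m' δ δ'⦄, m ≤ m' → 0 < δ' → δ' ≤ δ → ∀ᶠ N in atTop, Q m' δ' N ≤ Q m δ N)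

include hanti

lemma tendsto_microstateFilter_of_iInf
    (hsup : ⨅ (m : ℕ) (δ : ℝ) (_ : 0 < δ), limsup (Q m δ) atTop ≤ L)
    (hinf : L ≤ ⨅ (m : ℕ) (δ : ℝ) (_ : 0 < δ), liminf (Q m δ) atTop) :
    Tendsto (fun t => Q t.1.1 t.1.2 t.2) microstateFilter (nhds L) := by
  simp only [le_iInf_iff] at hinf
  refine tendsto_order.2 ⟨fun a ha => ?_, fun b hb => ?_⟩
  · exact eventually_microstateFilter_iff.2 ⟨0, 1, one_pos, fun m _ δ hδ =>
      eventually_lt_of_lt_liminf (ha.trans_le (hinf m δ hδ.1))⟩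
  · obtain ⟨m, δ, hδ, hlim⟩ : ∃ (m : ℕ) (δ : ℝ) (_ : 0 < δ), limsup (Q m δ) atTop < b := by
      simpa only [iInf_lt_iff] using hsup.trans_lt hb
    refine eventually_microstateFilter_iff.2 ⟨m, δ, hδ, fun m' hm δ' hδ' => ?_⟩
    filter_upwards [eventually_lt_of_limsup_lt hlim, hanti hm hδ'.1 hδ'.2] with N hN hle
    exact hle.trans_lt hN

lemma iInf_limsup_eq_and_iInf_liminf_eq
    (h : Tendsto (fun t => Q t.1.1 t.1.2 t.2) microstateFilter (nhds L)) :
    ⨅ (m : ℕ) (δ : ℝ) (_ : 0 < δ), limsup (Q m δ) atTop = L ∧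
      ⨅ (m : ℕ) (δ : ℝ) (_ : 0 < δ), liminf (Q m δ) atTop = L := by
  have hsup : ⨅ (m : ℕ) (δ : ℝ) (_ : 0 < δ), limsup (Q m δ) atTop ≤ L := by
    refine le_of_forall_gt_imp_ge_of_dense fun b hb => ?_
    obtain ⟨m, δ, hδ, hev⟩ := eventually_microstateFilter_iff.1 (h.eventually_lt_const hb)
    exact iInf₂_le_of_le m δ <| iInf_le_of_le hδ <| limsup_le_of_le
      (h := (hev m le_rfl δ ⟨hδ, le_rfl⟩).mono fun _ => le_of_lt)
  have hinf : L ≤ ⨅ (m : ℕ) (δ : ℝ) (_ : 0 < δ), liminf (Q m δ) atTop := by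
    refine le_iInf₂ fun m δ => le_iInf fun hδ => le_of_forall_lt_imp_le_of_dense fun a ha => ?_
    obtain ⟨m₀, δ₀, hδ₀, hev⟩ := eventually_microstateFilter_iff.1 (h.eventually_const_lt ha)
    have hmin : 0 < min δ δ₀ := lt_min hδ hδ₀
    refine le_liminf_of_le (h := ?_)
    filter_upwards [hev _ (le_max_right m m₀) _ ⟨hmin, min_le_right δ δ₀⟩,
      hanti (le_max_left m m₀) hmin (min_le_left δ δ₀)] with N hN hle
    exact hN.le.trans hle
  have hle : ⨅ (m : ℕ) (δ : ℝ) (_ : 0 < δ), liminf (Q m δ) atTop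
      ≤ ⨅ (m : ℕ) (δ : ℝ) (_ : 0 < δ), limsup (Q m δ) atTop :=
    iInf₂_mono fun _ _ => iInf_mono fun _ => liminf_le_limsup
  exact ⟨hsup.antisymm (hinf.trans hle), (hle.trans hsup).antisymm hinf⟩

end IteratedLimit

section MicrostateLimit

variable {Ω : Type*} [MeasurableSpace Ω] {μ : Measure Ω} {n : ℕ} {X : Fin n → Ω → ℝ} {R : ℝ}
  (hpos : ∀ m δ, 0 < δ → ∀ᶠ N : ℕ in atTop, volume (DeltaR μ X R N m δ) ≠ 0)

include hpos

lemma tendsto_volQ_of_microstateVolumeFormula (hvol : MicrostateVolumeFormula μ X R) :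
    Tendsto (fun t => (volQ μ X R t.2 t.1.1 t.1.2 : EReal)) microstateFilter
      (nhds (diffEntropy volume (μ.map fun ω i => X i ω))) :=
  tendsto_microstateFilter_of_iInf (Q := fun m δ N => (volQ μ X R N m δ : EReal))
    (fun _ m' _ δ' hm hδ' hδ => (hpos m' δ' hδ').mono fun _ hN =>
      EReal.coe_le_coe_iff.2 (volQ_le_volQ hm hδ hN)) hvol.1.ge hvol.2.le

lemma Isym_eq_neg_and_IsymUpper_eq_neg {L : EReal}
    (h : Tendsto (fun t => (symQ μ X R t.2 t.1.1 t.1.2 : EReal)) microstateFilter (nhds L)) :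
    Isym μ X R = -L ∧ IsymUpper μ X R = -L := by
  obtain ⟨hsup, hinf⟩ := iInf_limsup_eq_and_iInf_liminf_eq
    (Q := fun m δ N => (symQ μ X R N m δ : EReal))
    (fun _ m' _ δ' hm hδ' hδ => (hpos m' δ' hδ').mono fun _ hN =>
      EReal.coe_le_coe_iff.2 (symQ_le_symQ hm hδ (nonempty_of_measure_ne_zero hN))) h
  exact ⟨congrArg Neg.neg hsup, congrArg Neg.neg hinf⟩

lemma tendsto_symQ_add_sum_volQ {L : EReal}
    (h : Tendsto (fun t => (volQ μ X R t.2 t.1.1 t.1.2 : EReal)) microstateFilter (nhds L)) :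
    Tendsto (fun t => ((symQ μ X R t.2 t.1.1 t.1.2
      + ∑ i, volQ μ (fun _ : Fin 1 => X i) R t.2 t.1.1 t.1.2 : ℝ) : EReal))
      microstateFilter (nhds L) := by
  refine tendsto_order.2 ⟨fun a ha => ?_, fun b hb => ?_⟩
  · have hpos' : ∀ᶠ t in microstateFilter, volume (DeltaR μ X R t.2 t.1.1 t.1.2) ≠ 0 :=
      eventually_microstateFilter_iff.2 ⟨0, 1, one_pos, fun m _ δ hδ => hpos m δ hδ.1⟩
    filter_upwards [h.eventually_const_lt ha, hpos'] with t ht hne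
    exact ht.trans_le (EReal.coe_le_coe_iff.2 (volQ_le_symQ_add_sum_volQ hne))
  · obtain ⟨m, δ, hδ, hev⟩ := eventually_microstateFilter_iff.1 (h.eventually_lt_const hb)
    obtain ⟨m₀, δ₀, hδ₀, hsub⟩ := exists_sortedDeltaR_subset_DeltaR μ X R m hδ
    refine eventually_microstateFilter_iff.2 ⟨m₀, δ₀, hδ₀, fun m' hm δ' hδ' => ?_⟩
    filter_upwards [hev m le_rfl δ ⟨hδ, le_rfl⟩, hpos m' δ' hδ'.1] with N hN hne
    exact (EReal.coe_le_coe_iff.2 (symQ_add_sum_volQ_le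
      ((sortedDeltaR_subset hm hδ'.2).trans (hsub N)) hne)).trans_lt hN

theorem tendsto_symQ {L : EReal} {h : Fin n → EReal}
    (hL : Tendsto (fun t => (volQ μ X R t.2 t.1.1 t.1.2 : EReal)) microstateFilter (nhds L))
    (hh : ∀ i, Tendsto (fun t => (volQ μ (fun _ : Fin 1 => X i) R t.2 t.1.1 t.1.2 : EReal))
      microstateFilter (nhds (h i)))
    (hbot : ∀ i, h i ≠ ⊥) (htop : ∀ i, h i ≠ ⊤) :
    Tendsto (fun t => (symQ μ X R t.2 t.1.1 t.1.2 : EReal)) microstateFilter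
      (nhds (L - ∑ i, h i)) := by
  lift h to Fin n → ℝ using fun i => ⟨htop i, hbot i⟩
  have hsum : Tendsto (fun t => ((-∑ i, volQ μ (fun _ : Fin 1 => X i) R t.2 t.1.1 t.1.2 : ℝ)
      : EReal)) microstateFilter (nhds ((-∑ i, h i : ℝ) : EReal)) :=
    EReal.tendsto_coe.2 (tendsto_finsetSum _ fun i _ => EReal.tendsto_coe.1 (hh i)).neg
  have hadd := EReal.continuousAt_add (p := (L, ((-∑ i, h i : ℝ) : EReal)))
    (.inr (EReal.coe_ne_bot _)) (.inr (EReal.coe_ne_top _))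
  have hsub := hadd.tendsto.comp ((tendsto_symQ_add_sum_volQ hpos hL).prodMk_nhds hsum)
  rw [sub_eq_add_neg, ← coe_ereal_finsetSum, ← EReal.coe_neg]
  refine hsub.congr fun t => ?_
  rw [Function.comp_apply, ← EReal.coe_add, add_neg_cancel_right]

end MicrostateLimit

lemma pos_of_ae_abs_le_of_map_absolutelyContinuous {Ω : Type*} [MeasurableSpace Ω]
    {μ : Measure Ω} [NeZero μ] {X : Ω → ℝ} {R : ℝ} (hX : Measurable X)
    (hXR : ∀ᵐ ω ∂μ, |X ω| ≤ R) (hac : μ.map X ≪ volume) : 0 < R := by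
  by_contra! hR
  have hne : ∀ᵐ ω ∂μ, X ω ≠ 0 := ae_of_ae_map hX.aemeasurable (hac.ae_le (volume.ae_ne 0))
  obtain ⟨ω, hω, hωR⟩ := (hne.and hXR).exists
  exact hω (abs_nonpos_iff.1 (hωR.trans hR))

section BoundedVariables

variable {Ω : Type*} [MeasurableSpace Ω] {μ : Measure Ω}

lemma map_compl_Icc_of_ae_abs_le {X : Ω → ℝ} {R : ℝ} (hX : Measurable X)
    (hXR : ∀ᵐ ω ∂μ, |X ω| ≤ R) : μ.map X (Set.Icc (-R) R)ᶜ = 0 := by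
  rw [Measure.map_apply hX measurableSet_Icc.compl]
  exact measure_eq_zero_iff_ae_notMem.2 (hXR.mono fun ω hω h => h (abs_le.1 hω))

variable {n : ℕ} {X : Fin n → Ω → ℝ} {R : ℝ}

theorem relEntropy_map_pi_eq_neg_diffEntropy_add_sum [IsFiniteMeasure μ]
    (hX : ∀ i, Measurable (X i)) (hXR : ∀ i, ∀ᵐ ω ∂μ, |X i ω| ≤ R)
    (hfin : ∀ i, diffEntropy volume (μ.map (X i)) ≠ ⊥) :
    relEntropy (μ.map fun ω i => X i ω) (Measure.pi fun i => μ.map (X i))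
      = -diffEntropy volume (μ.map fun ω i => X i ω) + ∑ i, diffEntropy volume (μ.map (X i)) := by
  have hjoint : Measurable fun ω i => X i ω := measurable_pi_lambda _ hX
  have hmarg (i : Fin n) : MeasurePreserving (fun x : Fin n → ℝ => x i)
      (μ.map fun ω i => X i ω) (μ.map (X i)) :=
    ⟨measurable_pi_apply i, Measure.map_map (measurable_pi_apply i) hjoint⟩
  exact relEntropy_pi_eq_neg_diffEntropy_add_sum (fun _ => measurableSet_Icc)
    (fun _ => measure_Icc_lt_top.ne) (fun i => map_compl_Icc_of_ae_abs_le (hX i) (hXR i)) hmarg hfin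

variable [IsProbabilityMeasure μ]

lemma eventually_volume_DeltaR_ne_zero (hX : ∀ i, Measurable (X i))
    (hXR : ∀ i, ∀ᵐ ω ∂μ, |X i ω| ≤ R) (hR : Fin n → 0 < R) (m : ℕ) (δ : ℝ) (hδ : 0 < δ) :
    ∀ᶠ N : ℕ in atTop, volume (DeltaR μ X R N m δ) ≠ 0 :=
  (eventually_nonempty_DeltaR hX hXR m hδ).mono fun _ => volume_DeltaR_ne_zero hR

theorem Isym_and_IsymUpper_eq_neg_diffEntropy_add_sum (hX : ∀ i, Measurable (X i))
    (hXR : ∀ i, ∀ᵐ ω ∂μ, |X i ω| ≤ R) (hvol : MicrostateVolumeFormula μ X R)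
    (hvoli : ∀ i, MicrostateVolumeFormula μ (fun _ : Fin 1 => X i) R)
    (hfin : ∀ i, diffEntropy volume (μ.map (X i)) ≠ ⊥) :
    Isym μ X R
      = -diffEntropy volume (μ.map fun ω i => X i ω) + ∑ i, diffEntropy volume (μ.map (X i)) ∧
    IsymUpper μ X R
      = -diffEntropy volume (μ.map fun ω i => X i ω) + ∑ i, diffEntropy volume (μ.map (X i)) := by
  have hR (i : Fin n) : 0 < R := pos_of_ae_abs_le_of_map_absolutelyContinuous (hX i) (hXR i)
    (not_not.1 fun h => hfin i (diffEntropy_of_not_ac h))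
  have hpos := eventually_volume_DeltaR_ne_zero hX hXR hR
  have htop (i : Fin n) : diffEntropy volume (μ.map (X i)) ≠ ⊤ :=
    diffEntropy_ne_top measurableSet_Icc measure_Icc_lt_top.ne
      (map_compl_Icc_of_ae_abs_le (hX i) (hXR i))
  have hjoint := tendsto_volQ_of_microstateVolumeFormula hpos hvol
  have hmarg (i : Fin n) :
      Tendsto (fun t => (volQ μ (fun _ : Fin 1 => X i) R t.2 t.1.1 t.1.2 : EReal))
        microstateFilter (nhds (diffEntropy volume (μ.map (X i)))) := by
    rw [← diffEntropy_map_const_fin_one (hX i)]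
    exact tendsto_volQ_of_microstateVolumeFormula (eventually_volume_DeltaR_ne_zero
      (fun _ => hX i) (fun _ => hXR i) fun _ => hR i) (hvoli i)
  rw [← ereal_neg_sub_finsetSum hfin htop]
  exact Isym_eq_neg_and_IsymUpper_eq_neg hpos (tendsto_symQ hpos hjoint hmarg hfin htop)

end BoundedVariables

/-- Corollaries 1.7 and 1.8: if `H(Xᵢ) > -∞` for all `i`, then
`I_sym = Ī_sym = S(μ_{(X₁,…,Xₙ)}, μ_{X₁} ⊗ ⋯ ⊗ μ_{Xₙ})`, and `I_sym = 0` iff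
`X₁,…,Xₙ` are independent. -/
theorem stmt11 {Ω : Type*} [MeasurableSpace Ω] (μ : Measure Ω)
    [IsProbabilityMeasure μ] (n : ℕ) (X : Fin n → Ω → ℝ)
    (hmeas : ∀ i, Measurable (X i)) (R : ℝ)
    (hbdd : ∀ i, ∀ᵐ ω ∂μ, |X i ω| ≤ R)
    (hvol : MicrostateVolumeFormula μ X R)
    (hvoli : ∀ i, MicrostateVolumeFormula μ (fun _ : Fin 1 => X i) R)
    (hfin : ∀ i, diffEntropy volume (Measure.map (X i) μ) ≠ ⊥) :
    Isym μ X R = IsymUpper μ X R ∧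
    Isym μ X R = relEntropy (Measure.map (fun ω (i : Fin n) => X i ω) μ)
        (Measure.pi fun i => Measure.map (X i) μ) ∧
    (Isym μ X R = 0 ↔
      Measure.map (fun ω (i : Fin n) => X i ω) μ
        = Measure.pi fun i => Measure.map (X i) μ) := by
  have := fun i => Measure.isProbabilityMeasure_map (μ := μ) (hmeas i).aemeasurable
  have := Measure.isProbabilityMeasure_map (μ := μ) (measurable_pi_lambda _ hmeas).aemeasurable
  obtain ⟨hsym, hupper⟩ :=
    Isym_and_IsymUpper_eq_neg_diffEntropy_add_sum hmeas hbdd hvol hvoli hfin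
  rw [← relEntropy_map_pi_eq_neg_diffEntropy_add_sum hmeas hbdd hfin] at hsym hupper
  exact ⟨hsym.trans hupper.symm, hsym, by rw [hsym, relEntropy_eq_zero_iff]⟩
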